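/- Let s < T, let X₁,…,X_m : ℝ^d → ℝ^d be C^∞ vector fields with vanishing Euclidean divergence, and let β : [s,T]×ℝ^d → ℝ^m be continuous, continuously differentiable in the space variable, with M := sup_{[s,T]×ℝ^d} |β| < ∞ (Euclidean norm of β ∈ ℝ^m). Suppose ρ : [s,T]×ℝ^d → ℝ is continuous, continuously differentiable in t and twice continuously differentiable in y on (s,T]×ℝ^d, there is a compact set K ⊂ ℝ^d such that ρ(t,·) is supported in K for every t, and ρ solves ∂_tρ(t,y) = Δ_Gρ(t,·)(y) + div_G(β(t,·)ρ(t,·))(y) on (s,T]×ℝ^d. Then for every t ∈ [s,T]: ∫_{ℝ^d} ρ(t,y)² dy ≤ exp((M²/2)(t−s)) · ∫_{ℝ^d} ρ(s,y)² dy. -/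

import Mathlib

/-!
The proof is the energy method. With `pᵢ = Xᵢρ`, the product rule gives the pointwise identity
`ρ (Δ_G ρ + div_G (βρ)) = Σᵢ Xᵢ(ρ (pᵢ + βᵢ ρ)) - Σᵢ pᵢ² - ρ Σᵢ βᵢ pᵢ`, and completing the square
bounds the last two sums by `|β|² ρ² / 4 ≤ M² ρ² / 4`. A divergence-free field satisfies
`∫ X f = 0` for `f` of class `C¹` with compact support (`integral_dirDeriv_eq_zero`), so
`2 ∫ ρ ∂ₜρ ≤ (M²/2) ∫ ρ²` (`energy_inequality`). Differentiating `E(t) = ∫ ρ(t,·)²` under the integral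
sign on `(s,T)` (`hasDerivAt_energy`) yields `E' ≤ (M²/2) E`, so `exp(-(M²/2)(t-s)) E(t)` is
nonincreasing on `[s,T]`.
-/

open MeasureTheory Set

/-- Directional derivative of `f` along the vector field `V` at `x`. -/
noncomputable def dirDeriv {d : ℕ} (V : (Fin d → ℝ) → (Fin d → ℝ))
    (f : (Fin d → ℝ) → ℝ) (x : Fin d → ℝ) : ℝ :=
  fderiv ℝ f x (V x)

/-- Euclidean divergence of a vector field on `ℝ^d`. -/
noncomputable def divE {d : ℕ} (V : (Fin d → ℝ) → (Fin d → ℝ)) (x : Fin d → ℝ) : ℝ :=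
  ∑ k, fderiv ℝ (fun y => V y k) x (Pi.single k 1)

/-- Horizontal Laplacian `Δ_G f = Σᵢ Xᵢ(Xᵢ f)`. -/
noncomputable def deltaG {d m : ℕ} (X : Fin m → (Fin d → ℝ) → (Fin d → ℝ))
    (f : (Fin d → ℝ) → ℝ) (x : Fin d → ℝ) : ℝ :=
  ∑ i, dirDeriv (X i) (dirDeriv (X i) f) x

/-- Horizontal divergence `div_G v = Σᵢ Xᵢ vᵢ`. -/
noncomputable def divG {d m : ℕ} (X : Fin m → (Fin d → ℝ) → (Fin d → ℝ))
    (v : (Fin d → ℝ) → Fin m → ℝ) (x : Fin d → ℝ) : ℝ :=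
  ∑ i, dirDeriv (X i) (fun y => v y i) x

/-- Euclidean norm on `ℝ^m`. -/
noncomputable def euclNorm {m : ℕ} (v : Fin m → ℝ) : ℝ :=
  Real.sqrt (∑ i, v i ^ 2)

lemma contDiff_dirDeriv {d : ℕ} {V : (Fin d → ℝ) → (Fin d → ℝ)} {f : (Fin d → ℝ) → ℝ}
    (hV : ContDiff ℝ 1 V) (hf : ContDiff ℝ 2 f) : ContDiff ℝ 1 (dirDeriv V f) :=
  (hf.fderiv_right (m := 1) (by norm_num)).clm_apply hV

lemma continuous_dirDeriv {d : ℕ} {V : (Fin d → ℝ) → (Fin d → ℝ)} {f : (Fin d → ℝ) → ℝ}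
    (hV : Continuous V) (hf : ContDiff ℝ 1 f) : Continuous (dirDeriv V f) :=
  (hf.continuous_fderiv (by norm_num)).clm_apply hV

lemma integrable_dirDeriv {d : ℕ} {V : (Fin d → ℝ) → (Fin d → ℝ)} {f : (Fin d → ℝ) → ℝ}
    (hV : Continuous V) (hf : ContDiff ℝ 1 f) (hfs : HasCompactSupport f) :
    Integrable (dirDeriv V f) := by
  refine (continuous_dirDeriv hV hf).integrable_of_hasCompactSupport ?_
  refine (hfs.fderiv ℝ).mono fun x hx => ?_
  contrapose! hx
  simp only [Function.mem_support, not_not] at hx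
  simp [dirDeriv, hx]

/-- A divergence-free vector field is formally skew-adjoint: its derivatives of compactly
supported functions have zero mean. -/
lemma integral_dirDeriv_eq_zero {d : ℕ} {V : (Fin d → ℝ) → (Fin d → ℝ)} {f : (Fin d → ℝ) → ℝ}
    (hV : ContDiff ℝ 1 V) (hdiv : ∀ x, divE V x = 0)
    (hf : ContDiff ℝ 1 f) (hfs : HasCompactSupport f) :
    ∫ x, dirDeriv V f x = 0 := by
  have hVk : ∀ k, ContDiff ℝ 1 (fun y => V y k) := fun k => contDiff_pi.1 hV k
  have hcf : ∀ k : Fin d, Continuous fun x => fderiv ℝ f x (Pi.single k 1) := fun k =>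
    (hf.continuous_fderiv (by norm_num)).clm_apply continuous_const
  have hcV : ∀ k : Fin d, Continuous fun x => fderiv ℝ (fun y => V y k) x (Pi.single k 1) :=
    fun k => ((hVk k).continuous_fderiv (by norm_num)).clm_apply continuous_const
  have hi1 : ∀ k : Fin d, Integrable fun x => V x k * fderiv ℝ f x (Pi.single k 1) := fun k =>
    ((hVk k).continuous.mul (hcf k)).integrable_of_hasCompactSupport
      (hfs.fderiv_apply ℝ (Pi.single k 1)).mul_left
  have hi2 : ∀ k : Fin d,
      Integrable fun x => fderiv ℝ (fun y => V y k) x (Pi.single k 1) * f x := fun k =>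
    ((hcV k).mul hf.continuous).integrable_of_hasCompactSupport hfs.mul_left
  have hi3 : ∀ k : Fin d, Integrable fun x => V x k * f x := fun k =>
    ((hVk k).continuous.mul hf.continuous).integrable_of_hasCompactSupport hfs.mul_left
  have hexp : ∀ x, dirDeriv V f x = ∑ k, V x k * fderiv ℝ f x (Pi.single k 1) := by
    intro x
    have hx : V x = ∑ k, V x k • (Pi.single k (1 : ℝ) : Fin d → ℝ) := by
      simpa using (pi_eq_sum_univ' (V x))
    unfold dirDeriv
    conv_lhs => rw [hx]
    simp
  simp_rw [hexp]
  rw [integral_finsetSum _ fun k _ => hi1 k]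
  have hparts : ∀ k : Fin d, ∫ x, V x k * fderiv ℝ f x (Pi.single k 1)
      = -∫ x, fderiv ℝ (fun y => V y k) x (Pi.single k 1) * f x := fun k =>
    integral_mul_fderiv_eq_neg_fderiv_mul_of_integrable (hi2 k) (hi1 k) (hi3 k)
      (fun x _ => ((hVk k).differentiable (by norm_num)).differentiableAt)
      (fun x _ => (hf.differentiable (by norm_num)).differentiableAt)
  simp_rw [hparts]
  rw [Finset.sum_neg_distrib, ← integral_finsetSum _ fun k _ => hi2 k]
  have hzero : ∀ x, ∑ k, fderiv ℝ (fun y => V y k) x (Pi.single k 1) * f x = 0 := by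
    intro x
    rw [← Finset.sum_mul]
    change divE V x * f x = 0
    rw [hdiv x, zero_mul]
  simp [hzero]

/-- The spatial energy estimate at a fixed time. -/
lemma energy_inequality {d m : ℕ} {X : Fin m → (Fin d → ℝ) → (Fin d → ℝ)}
    (hX : ∀ i, ContDiff ℝ 1 (X i)) (hXdiv : ∀ i x, divE (X i) x = 0)
    {b : (Fin d → ℝ) → Fin m → ℝ} (hb : ContDiff ℝ 1 b) {M : ℝ}
    (hbM : ∀ y, euclNorm (b y) ≤ M)
    {u : (Fin d → ℝ) → ℝ} (hu : ContDiff ℝ 2 u) (hus : HasCompactSupport u) :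
    ∫ y, 2 * u y * (deltaG X u y + divG X (fun z i => b z i * u z) y)
      ≤ M ^ 2 / 2 * ∫ y, u y ^ 2 := by
  have hu1 : ContDiff ℝ 1 u := hu.of_le (by norm_num)
  have hp : ∀ i, ContDiff ℝ 1 (dirDeriv (X i) u) := fun i => contDiff_dirDeriv (hX i) hu
  have hbi : ∀ i, ContDiff ℝ 1 (fun z => b z i) := fun i => contDiff_pi.1 hb i
  have hbu : ∀ i, ContDiff ℝ 1 (fun z => b z i * u z) := fun i => (hbi i).mul hu1
  -- the flux, whose horizontal divergence integrates to zero
  let F : Fin m → (Fin d → ℝ) → ℝ := fun i z => u z * (dirDeriv (X i) u z + b z i * u z)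
  have hF : ∀ i, ContDiff ℝ 1 (F i) := fun i => hu1.mul ((hp i).add (hbu i))
  have hFs : ∀ i, HasCompactSupport (F i) := fun i => hus.mul_right
  have hFint : ∀ i, Integrable (dirDeriv (X i) (F i)) := fun i =>
    integrable_dirDeriv (hX i).continuous (hF i) (hFs i)
  have hdF : ∀ i y, dirDeriv (X i) (F i) y =
      u y * (dirDeriv (X i) (dirDeriv (X i) u) y + dirDeriv (X i) (fun z => b z i * u z) y)
        + (dirDeriv (X i) u y + b y i * u y) * dirDeriv (X i) u y := by
    intro i y
    have h1 := (hu1.differentiable (by norm_num) y).hasFDerivAt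
    have h2 := ((hp i).differentiable (by norm_num) y).hasFDerivAt
    have h3 := ((hbu i).differentiable (by norm_num) y).hasFDerivAt
    have h := (h1.mul (h2.add h3)).fderiv
    change fderiv ℝ (F i) y = _ at h
    change fderiv ℝ (F i) y (X i y) = _
    rw [h]
    simp [dirDeriv, mul_add]
  have hptw : ∀ y, 2 * u y * (deltaG X u y + divG X (fun z i => b z i * u z) y)
      ≤ 2 * ∑ i, dirDeriv (X i) (F i) y + M ^ 2 / 2 * u y ^ 2 := by
    intro y
    have hsq : ∑ i, b y i ^ 2 ≤ M ^ 2 := by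
      have h0 : 0 ≤ ∑ i, b y i ^ 2 := Finset.sum_nonneg fun i _ => sq_nonneg _
      rw [← Real.sq_sqrt h0]
      exact pow_le_pow_left₀ (Real.sqrt_nonneg _) (hbM y) 2
    have hid : 2 * u y * (deltaG X u y + divG X (fun z i => b z i * u z) y)
        = 2 * ∑ i, dirDeriv (X i) (F i) y + (∑ i, b y i ^ 2) / 2 * u y ^ 2
          - 2 * ∑ i, (dirDeriv (X i) u y + b y i * u y / 2) ^ 2 := by
      simp only [deltaG, divG, hdF]
      rw [← Finset.sum_add_distrib, Finset.mul_sum, Finset.mul_sum, Finset.mul_sum,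
        Finset.sum_div, Finset.sum_mul, ← Finset.sum_add_distrib, ← Finset.sum_sub_distrib]
      refine Finset.sum_congr rfl fun i _ => ?_
      ring
    have hpos : 0 ≤ ∑ i, (dirDeriv (X i) u y + b y i * u y / 2) ^ 2 :=
      Finset.sum_nonneg fun i _ => sq_nonneg _
    rw [hid]
    nlinarith [mul_le_mul_of_nonneg_right hsq (sq_nonneg (u y))]
  have hcont : Continuous fun y => deltaG X u y + divG X (fun z i => b z i * u z) y :=
    (continuous_finsetSum _ fun i _ => continuous_dirDeriv (hX i).continuous (hp i)).add
      (continuous_finsetSum _ fun i _ => continuous_dirDeriv (hX i).continuous (hbu i))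
  have hL : Integrable fun y => 2 * u y * (deltaG X u y + divG X (fun z i => b z i * u z) y) :=
    ((continuous_const.mul hu.continuous).mul hcont).integrable_of_hasCompactSupport
      hus.mul_left.mul_right
  have hu2 : Integrable fun y => u y ^ 2 := by
    simp_rw [pow_two]
    exact (hu.continuous.mul hu.continuous).integrable_of_hasCompactSupport hus.mul_left
  have hS : Integrable fun y => 2 * ∑ i, dirDeriv (X i) (F i) y :=
    (integrable_finsetSum _ fun i _ => hFint i).const_mul 2
  calc _ ≤ ∫ y, (2 * ∑ i, dirDeriv (X i) (F i) y + M ^ 2 / 2 * u y ^ 2) :=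
        integral_mono hL (hS.add (hu2.const_mul _)) hptw
    _ = M ^ 2 / 2 * ∫ y, u y ^ 2 := by
        rw [integral_add hS (hu2.const_mul _), integral_const_mul, integral_const_mul,
          integral_finsetSum _ fun i _ => hFint i]
        simp [integral_dirDeriv_eq_zero (hX _) (hXdiv _) (hF _) (hFs _)]

/-- Differentiation of the energy under the integral sign; the bound on a compact time interval
around `t` comes from joint continuity on its product with `K`. -/
lemma hasDerivAt_energy {d : ℕ} {s T : ℝ} {ρ : ℝ → (Fin d → ℝ) → ℝ}
    (hρcont : ContinuousOn (fun p : ℝ × (Fin d → ℝ) => ρ p.1 p.2) (Icc s T ×ˢ univ))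
    (hρtC : ContinuousOn (fun p : ℝ × (Fin d → ℝ) => deriv (fun τ => ρ τ p.2) p.1)
      (Ioc s T ×ˢ univ))
    {K : Set (Fin d → ℝ)} (hK : IsCompact K)
    (hsupp : ∀ t ∈ Icc s T, ∀ y ∉ K, ρ t y = 0)
    (hdiff : ∀ t ∈ Ioc s T, ∀ y, DifferentiableAt ℝ (fun τ => ρ τ y) t)
    {t : ℝ} (ht : t ∈ Ioo s T) :
    HasDerivAt (fun τ => ∫ y, ρ τ y ^ 2)
      (∫ y, 2 * ρ t y * deriv (fun τ => ρ τ y) t) t := by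
  obtain ⟨a, hsa, hat⟩ := exists_between ht.1
  obtain ⟨b, htb, hbT⟩ := exists_between ht.2
  have hIoc : Icc a b ⊆ Ioc s T := fun x hx => ⟨hsa.trans_le hx.1, hx.2.trans hbT.le⟩
  have hIcc : Icc a b ⊆ Icc s T := hIoc.trans Ioc_subset_Icc_self
  have hslice : ∀ τ ∈ Icc s T, Continuous (ρ τ) := fun τ hτ =>
    hρcont.comp_continuous (f := fun y => (τ, y)) (by fun_prop) fun y => ⟨hτ, mem_univ _⟩
  have hslice' : Continuous fun y => deriv (fun τ => ρ τ y) t :=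
    hρtC.comp_continuous (f := fun y => (t, y)) (by fun_prop)
      fun y => ⟨⟨ht.1, ht.2.le⟩, mem_univ _⟩
  have hcs : HasCompactSupport (ρ t) :=
    HasCompactSupport.intro hK fun y hy => hsupp t ⟨ht.1.le, ht.2.le⟩ y hy
  have htI : t ∈ Icc s T := ⟨ht.1.le, ht.2.le⟩
  have hF'c : ContinuousOn
      (fun p : ℝ × (Fin d → ℝ) => 2 * ρ p.1 p.2 * deriv (fun τ => ρ τ p.2) p.1)
      (Icc a b ×ˢ K) :=
    (continuousOn_const.mul (hρcont.mono (prod_mono hIcc (subset_univ _)))).mul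
      (hρtC.mono (prod_mono hIoc (subset_univ _)))
  obtain ⟨C, hC⟩ := (isCompact_Icc.prod hK).exists_bound_of_continuousOn hF'c
  have hnhds : Icc a b ∈ nhds t := Icc_mem_nhds hat htb
  refine (hasDerivAt_integral_of_dominated_loc_of_deriv_le (μ := volume)
    (F := fun τ y => ρ τ y ^ 2)
    (F' := fun τ y => 2 * ρ τ y * deriv (fun σ => ρ σ y) τ)
    (bound := K.indicator fun _ => C) hnhds ?_ ?_ ?_ ?_ ?_ ?_).2
  · filter_upwards [hnhds] with τ hτ
    exact ((hslice τ (hIcc hτ)).pow 2).aestronglyMeasurable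
  · simp_rw [pow_two]
    exact ((hslice t htI).mul (hslice t htI)).integrable_of_hasCompactSupport hcs.mul_left
  · exact ((continuous_const.mul (hslice t htI)).mul hslice').aestronglyMeasurable
  · refine Filter.Eventually.of_forall fun y τ hτ => ?_
    by_cases hy : y ∈ K
    · simpa [hy] using hC (τ, y) ⟨hτ, hy⟩
    · simp [hy, hsupp τ (hIcc hτ) y hy]
  · rw [integrable_indicator_iff hK.measurableSet]
    exact integrableOn_const hK.measure_ne_top
  · refine Filter.Eventually.of_forall fun y τ hτ => ?_
    simpa using! (hdiff τ (hIoc hτ) y).hasDerivAt.pow 2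

/-- `L²` estimate for compactly supported classical solutions of the subelliptic
Fokker-Planck equation: `∫ ρ(t)² ≤ exp((M²/2)(t-s)) ∫ ρ(s)²` where `M` bounds `|β|`. -/
theorem fokker_planck_L2_estimate
    {d m : ℕ} (hd : 1 ≤ d) (hm : 1 ≤ m)
    (X : Fin m → (Fin d → ℝ) → (Fin d → ℝ))
    (hXsmooth : ∀ i, ContDiff ℝ (⊤ : ℕ∞) (X i))
    (hXdiv : ∀ i x, divE (X i) x = 0)
    (s T : ℝ) (hsT : s < T)
    (β : ℝ → (Fin d → ℝ) → Fin m → ℝ)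
    (hβcont : ContinuousOn (fun p : ℝ × (Fin d → ℝ) => β p.1 p.2) (Icc s T ×ˢ univ))
    (hβC1 : ∀ t ∈ Icc s T, ContDiff ℝ 1 (fun y => β t y))
    (M : ℝ)
    (hβbdd : ∀ t ∈ Icc s T, ∀ y, euclNorm (β t y) ≤ M)
    (ρ : ℝ → (Fin d → ℝ) → ℝ)
    (hρcont : ContinuousOn (fun p : ℝ × (Fin d → ℝ) => ρ p.1 p.2) (Icc s T ×ˢ univ))
    (hρC2 : ∀ t ∈ Ioc s T, ContDiff ℝ 2 (ρ t))
    (hρtC : ContinuousOn (fun p : ℝ × (Fin d → ℝ) => deriv (fun τ => ρ τ p.2) p.1)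
      (Ioc s T ×ˢ univ))
    (K : Set (Fin d → ℝ)) (hK : IsCompact K)
    (hsupp : ∀ t ∈ Icc s T, ∀ y ∉ K, ρ t y = 0)
    (hpde : ∀ t ∈ Ioc s T, ∀ y, HasDerivAt (fun τ => ρ τ y)
      (deltaG X (ρ t) y + divG X (fun z i => β t z i * ρ t z) y) t) :
    ∀ t ∈ Icc s T,
      ∫ y, (ρ t y) ^ 2 ≤ Real.exp (M ^ 2 / 2 * (t - s)) * ∫ y, (ρ s y) ^ 2 := by
  have hX1 : ∀ i, ContDiff ℝ 1 (X i) := fun i => (hXsmooth i).of_le (by exact_mod_cast le_top)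
  set c : ℝ := M ^ 2 / 2 with hc
  let E : ℝ → ℝ := fun τ => ∫ y, ρ τ y ^ 2
  have hEcont : ContinuousOn E (Icc s T) := by
    refine continuousOn_integral_of_compact_support (f := fun τ y => ρ τ y ^ 2) hK
      (hρcont.pow 2) fun τ y hτ hy => ?_
    simp [hsupp τ hτ y hy]
  have hE' : ∀ t ∈ Ioo s T,
      HasDerivAt E (∫ y, 2 * ρ t y * deriv (fun τ => ρ τ y) t) t := fun t ht =>
    hasDerivAt_energy hρcont hρtC hK hsupp (fun τ hτ y => (hpde τ hτ y).differentiableAt) ht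
  have hE'le : ∀ t ∈ Ioo s T,
      ∫ y, 2 * ρ t y * deriv (fun τ => ρ τ y) t ≤ c * E t := by
    intro t ht
    have htI : t ∈ Icc s T := ⟨ht.1.le, ht.2.le⟩
    have htI' : t ∈ Ioc s T := ⟨ht.1, ht.2.le⟩
    simp_rw [fun y => (hpde t htI' y).deriv]
    exact energy_inequality hX1 hXdiv (hβC1 t htI) (hβbdd t htI) (hρC2 t htI')
      (HasCompactSupport.intro hK fun y hy => hsupp t htI y hy)
  -- Grönwall's inequality, through monotonicity of the rescaled energy
  have hder : ∀ t ∈ Ioo s T, HasDerivAt (fun τ => Real.exp (-(c * (τ - s))) * E τ)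
      (Real.exp (-(c * (t - s))) * -(c * 1) * E t + Real.exp (-(c * (t - s))) *
        ∫ y, 2 * ρ t y * deriv (fun τ => ρ τ y) t) t := fun t ht =>
    ((((hasDerivAt_id t).sub_const s).const_mul c).neg.exp).mul (hE' t ht)
  have hanti : AntitoneOn (fun τ => Real.exp (-(c * (τ - s))) * E τ) (Icc s T) := by
    refine antitoneOn_of_deriv_nonpos (convex_Icc s T) ?_ ?_ ?_
    · exact (Continuous.continuousOn (by fun_prop)).mul hEcont
    · rw [interior_Icc]
      exact fun t ht => (hder t ht).differentiableAt.differentiableWithinAt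
    · rw [interior_Icc]
      intro t ht
      rw [(hder t ht).deriv]
      nlinarith [mul_le_mul_of_nonneg_left (hE'le t ht) (Real.exp_pos (-(c * (t - s)))).le]
  intro t ht
  have h := hanti (left_mem_Icc.2 hsT.le) ht ht.1
  simp only [sub_self, mul_zero, neg_zero, Real.exp_zero, one_mul] at h
  change E t ≤ Real.exp (c * (t - s)) * E s
  calc E t = Real.exp (c * (t - s)) * (Real.exp (-(c * (t - s))) * E t) := by
        rw [← mul_assoc, ← Real.exp_add, add_neg_cancel, Real.exp_zero, one_mul]
    _ ≤ _ := mul_le_mul_of_nonneg_left h (Real.exp_pos _).le
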